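/- In the four-agent HK model with communication noise, suppose r_1 = r_4 = 1/3, r_2 = r_3 = 1, x_1(t) = 0, x_4(t) = 1, and x_2(t), x_3(t) ∈ (1/2 - (3/2)η, 1/2 + (3/2)η) with η < 1/9. Then agent 1's neighbor set is {1} and agent 4's neighbor set is {4}, so after the update x_i(t+1) = Π_{[0,1]}(|N_i(t)|^{-1} Σ_{j∈N_i(t)} (x_j(t) + ζ_{ji}(t))) with |ζ_{ji}(t)| ≤ η and ζ_{ii}=0, one has x_1(t+1) = 0, x_4(t+1) = 1, and x_2(t+1), x_3(t+1) ∈ (1/2 - (3/2)η, 1/2 + (3/2)η). -/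

import Mathlib

/-!
Since `η < 1/9`, the middle opinions lie in `(1/3, 2/3)`, so they are out of reach of the extreme
agents, whose confidence radius is `1/3`; an isolated agent hears only itself, without noise, and
keeps its opinion. Each middle agent, with radius `1`, hears all four agents. The two middle
opinions sum to something within `3η` of `1`, the extreme ones sum to `1`, and the noises in
the three foreign messages add at most `3η` in absolute value, so the average of the four messages is strictly within
`6η/4 = 3η/2` of `1/2`. This interval lies in `[0,1]`, where the projection is the identity.
-/

open Finset

/-- Projection of a real number onto the interval [0,1]. -/
noncomputable def proj01 (x : ℝ) : ℝ := if x > 1 then 1 else if x < 0 then 0 else x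

/-- Neighbor set of agent i. -/
noncomputable def nbr {n : ℕ} (x r : Fin n → ℝ) (i : Fin n) : Finset (Fin n) :=
  Finset.univ.filter (fun j => |x j - x i| ≤ r i)

theorem proj01_of_mem {y : ℝ} (h0 : 0 ≤ y) (h1 : y ≤ 1) : proj01 y = y := by
  simp [proj01, not_lt.mpr h0, not_lt.mpr h1]

/-- An isolated agent with opinion in `[0,1]` and no self-noise keeps its opinion. -/
theorem update_of_isolated {n : ℕ} {x r : Fin n → ℝ} {ζ : Fin n → Fin n → ℝ} {i : Fin n}
    (hN : nbr x r i = {i}) (hζ : ζ i i = 0) (h0 : 0 ≤ x i) (h1 : x i ≤ 1) :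
    proj01 (((nbr x r i).card : ℝ)⁻¹ * ∑ j ∈ nbr x r i, (x j + ζ j i)) = x i := by
  simp [hN, hζ, proj01_of_mem h0 h1]

/-- The invariance step of the four-agent example: with r = (1/3, 1, 1, 1/3),
x₁ = 0, x₄ = 1 and the middle opinions in (1/2 - 3η/2, 1/2 + 3η/2), η < 1/9,
the extreme agents are isolated and the configuration is invariant under one
step of the HK dynamics with communication noise. -/
theorem four_agent_example (η : ℝ) (hη : 0 < η) (hη' : η < 1 / 9)
    (x r : Fin 4 → ℝ) (ζ : Fin 4 → Fin 4 → ℝ)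
    (hr0 : r 0 = 1 / 3) (hr1 : r 1 = 1) (hr2 : r 2 = 1) (hr3 : r 3 = 1 / 3)
    (hx0 : x 0 = 0) (hx3 : x 3 = 1)
    (hx1 : x 1 ∈ Set.Ioo (1 / 2 - 3 / 2 * η) (1 / 2 + 3 / 2 * η))
    (hx2 : x 2 ∈ Set.Ioo (1 / 2 - 3 / 2 * η) (1 / 2 + 3 / 2 * η))
    (hζ : ∀ j i, |ζ j i| ≤ η) (hζ0 : ∀ i, ζ i i = 0)
    (x' : Fin 4 → ℝ)
    (hx' : ∀ i, x' i = proj01 (((nbr x r i).card : ℝ)⁻¹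
        * ∑ j ∈ nbr x r i, (x j + ζ j i))) :
    nbr x r 0 = {0} ∧ nbr x r 3 = {3} ∧
      x' 0 = 0 ∧ x' 3 = 1 ∧
      x' 1 ∈ Set.Ioo (1 / 2 - 3 / 2 * η) (1 / 2 + 3 / 2 * η) ∧
      x' 2 ∈ Set.Ioo (1 / 2 - 3 / 2 * η) (1 / 2 + 3 / 2 * η) := by
  obtain ⟨a1, b1⟩ := hx1
  obtain ⟨a2, b2⟩ := hx2
  have hN0 : nbr x r 0 = {0} := by
    ext j
    simp only [nbr, mem_filter, mem_univ, true_and, mem_singleton, abs_le, hr0, hx0]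
    fin_cases j
    · simp [hx0]
    · simpa using fun _ => (by linarith : 3⁻¹ < x 1)
    · simpa using fun _ => (by linarith : 3⁻¹ < x 2)
    · simpa [hx3] using fun _ => (by norm_num : (3⁻¹ : ℝ) < 1)
  have hN3 : nbr x r 3 = {3} := by
    ext j
    simp only [nbr, mem_filter, mem_univ, true_and, mem_singleton, abs_le, hr3, hx3]
    fin_cases j
    · simpa [hx0] using fun h => absurd h (by norm_num : ¬ (1 : ℝ) ≤ 3⁻¹)
    · simpa using fun h => absurd h (by intro h; linarith)
    · simpa using fun h => absurd h (by intro h; linarith)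
    · simp [hx3]
  have hN1 : nbr x r 1 = univ := by
    refine filter_true_of_mem fun j _ => ?_
    rw [hr1, abs_le]
    fin_cases j <;> constructor <;> simp <;> linarith
  have hN2 : nbr x r 2 = univ := by
    refine filter_true_of_mem fun j _ => ?_
    rw [hr2, abs_le]
    fin_cases j <;> constructor <;> simp <;> linarith
  have hb : ∀ j i, -η ≤ ζ j i ∧ ζ j i ≤ η := fun j i => abs_le.mp (hζ j i)
  -- Once the average lies in the middle interval, the projection does nothing.
  have key : ∀ y : ℝ, y ∈ Set.Ioo (1 / 2 - 3 / 2 * η) (1 / 2 + 3 / 2 * η) →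
      proj01 y ∈ Set.Ioo (1 / 2 - 3 / 2 * η) (1 / 2 + 3 / 2 * η) := by
    intro y hy
    rwa [proj01_of_mem (by linarith [hy.1]) (by linarith [hy.2])]
  refine ⟨hN0, hN3, ?_, ?_, ?_, ?_⟩
  · rw [hx' 0, update_of_isolated hN0 (hζ0 0) (by simp [hx0]) (by simp [hx0]), hx0]
  · rw [hx' 3, update_of_isolated hN3 (hζ0 3) (by simp [hx3]) (by simp [hx3]), hx3]
  · rw [hx' 1, hN1]
    apply key
    simp only [card_univ, Fintype.card_fin, Fin.sum_univ_four, hζ0, hx0, hx3]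
    obtain ⟨p0, q0⟩ := hb 0 1
    obtain ⟨p2, q2⟩ := hb 2 1
    obtain ⟨p3, q3⟩ := hb 3 1
    constructor <;> push_cast <;> linarith
  · rw [hx' 2, hN2]
    apply key
    simp only [card_univ, Fintype.card_fin, Fin.sum_univ_four, hζ0, hx0, hx3]
    obtain ⟨p0, q0⟩ := hb 0 2
    obtain ⟨p1, q1⟩ := hb 1 2
    obtain ⟨p3, q3⟩ := hb 3 2
    constructor <;> push_cast <;> linarith
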